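/- For every two-element subset {j,k} ⊆ {1,…,7}, exactly 9 of the 16 Pauli words g on 7 qubits supported in {j,k} satisfy: c·φ₇(ε(g))·g ∈ S₇ for some c ∈ {1, −1, i, −i}. (This is the statement f_{S₇}(2) = 9/16: the Steane code corrects an arbitrary two-qubit error with probability 9/16.) -/

import Mathlib

/-!
Pauli words commute up to a sign `wordSign` computed letter by letter, and square to the identity,
so the syndrome of a word is a function of its letters alone (`syndrome_pauliWord`).

Write a word `P` supported in `{j, k}` as an `X`-part and a `Z`-part. Since the Steane code treats
the two parts independently and recovers weight-one errors, `φ₇(ε(P))` has the same letters as `P`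
exactly when each part has weight at most one, which happens for `3 · 3 = 9` words
(`card_corrected`). In that case `φ₇(ε(P)) · P = 1` lies in the stabilizer. Otherwise some part of
weight two is completed by `φ₇` to a weight-three logical operator, which anticommutes with
`XXXXXXX` or `ZZZZZZZ` (`phi7Word_eq_or`); these two operators commute with all generators, hence
with the whole stabilizer, so no multiple of `φ₇(ε(P)) · P` by a phase lies in it
(`wordSign_of_mem`).
-/

open Matrix Kronecker
open scoped Classical

noncomputable section

/-- The four single-qubit Pauli matrices `I, X, Y, Z` (indexed `0,1,2,3`). -/
def PauliMat : Fin 4 → Matrix (Fin 2) (Fin 2) ℂ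
  | 0 => 1
  | 1 => !![0, 1; 1, 0]
  | 2 => !![0, -Complex.I; Complex.I, 0]
  | 3 => !![1, 0; 0, -1]

/-- The allowed phases `{1, -1, i, -i}`. -/
def PauliPhase : Set ℂ := {1, -1, Complex.I, -Complex.I}

/-- The `n`-fold Kronecker product `P₁ ⊗ ⋯ ⊗ Pₙ` of single-qubit Pauli matrices
(qubit 1 leftmost). -/
def pauliWord : (n : ℕ) → (Fin n → Fin 4) → Matrix (Fin (2 ^ n)) (Fin (2 ^ n)) ℂ
  | 0, _ => 1
  | n + 1, P =>
      Matrix.reindex (finProdFinEquiv.trans (finCongr (by ring)))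
        (finProdFinEquiv.trans (finCongr (by ring)))
        (Matrix.kroneckerMap (· * ·) (PauliMat (P 0)) (pauliWord n (fun j => P j.succ)))

/-- The `n`-qubit Pauli group `Gⁿ`, as a set of `2ⁿ × 2ⁿ` complex matrices. -/
def PauliGroup (n : ℕ) : Set (Matrix (Fin (2 ^ n)) (Fin (2 ^ n)) ℂ) :=
  {A | ∃ c ∈ PauliPhase, ∃ P : Fin n → Fin 4, A = c • pauliWord n P}

/-- The syndrome of `g` with respect to generators `gs`: the `i`-th component is `0`
if `g` commutes with `gs i` and `1` otherwise (for Pauli elements, "otherwise" means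
anticommutes). -/
def syndrome {n r : ℕ} (gs : Fin r → Matrix (Fin (2 ^ n)) (Fin (2 ^ n)) ℂ)
    (g : Matrix (Fin (2 ^ n)) (Fin (2 ^ n)) ℂ) : Fin r → ZMod 2 :=
  fun i => if g * gs i = gs i * g then 0 else 1


/-- The six generators of the Steane code stabilizer:
g₁ = IIIXXXX, g₂ = IXXIIXX, g₃ = XIXIXIX, g₄ = IIIZZZZ, g₅ = IZZIIZZ, g₆ = ZIZIZIZ. -/
def steaneGens : Fin 6 → Matrix (Fin (2 ^ 7)) (Fin (2 ^ 7)) ℂ :=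
  ![pauliWord 7 ![0, 0, 0, 1, 1, 1, 1], pauliWord 7 ![0, 1, 1, 0, 0, 1, 1],
    pauliWord 7 ![1, 0, 1, 0, 1, 0, 1], pauliWord 7 ![0, 0, 0, 3, 3, 3, 3],
    pauliWord 7 ![0, 3, 3, 0, 0, 3, 3], pauliWord 7 ![3, 0, 3, 0, 3, 0, 3]]

/-- The letters (0 = I, 1 = X, 2 = Y, 3 = Z) of the Pauli word assigned by the Steane
error-correcting function to a syndrome ε: with a = 4ε₁+2ε₂+ε₃ and b = 4ε₄+2ε₅+ε₆,
qubit j gets Y if j = a = b ≠ 0, Z if j = a ≠ b, X if j = b ≠ a, and I otherwise. -/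
def phi7Word (e : Fin 6 → ZMod 2) : Fin 7 → Fin 4 := fun j =>
  let a : ℕ := 4 * (e 0).val + 2 * (e 1).val + (e 2).val
  let b : ℕ := 4 * (e 3).val + 2 * (e 4).val + (e 5).val
  if j.val + 1 = a ∧ a = b then 2
  else if j.val + 1 = a then 3
  else if j.val + 1 = b then 1
  else 0

/-- The error-correcting function of the Steane code. -/
def phi7 (e : Fin 6 → ZMod 2) : Matrix (Fin (2 ^ 7)) (Fin (2 ^ 7)) ℂ :=
  pauliWord 7 (phi7Word e)

/-- The sign `±1` with which two single-qubit Pauli letters commute: `-1` exactly when both are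
different from `I` and from each other. -/
def letterSign (p q : Fin 4) : ℤ := if p = 0 ∨ q = 0 ∨ p = q then 1 else -1

/-- The sign `±1` with which two Pauli words commute, see `pauliWord_mul_comm`. -/
def wordSign {n : ℕ} (P Q : Fin n → Fin 4) : ℤ := ∏ i, letterSign (P i) (Q i)

lemma letterSign_eq (p q : Fin 4) : letterSign p q = 1 ∨ letterSign p q = -1 := by
  unfold letterSign; split_ifs <;> simp

lemma wordSign_eq {n : ℕ} (P Q : Fin n → Fin 4) : wordSign P Q = 1 ∨ wordSign P Q = -1 := by
  induction n with
  | zero => left; simp [wordSign]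
  | succ n ih =>
    have h := ih (fun j => P j.succ) (fun j => Q j.succ)
    unfold wordSign at h ⊢
    rw [Fin.prod_univ_succ]
    rcases h with h | h <;> rcases letterSign_eq (P 0) (Q 0) with h' | h' <;> simp [h, h']

lemma pauliMat_mul_comm (p q : Fin 4) :
    PauliMat p * PauliMat q = (letterSign p q : ℂ) • (PauliMat q * PauliMat p) := by
  fin_cases p <;> fin_cases q <;> simp [PauliMat, letterSign]

lemma pauliMat_mul_self (p : Fin 4) : PauliMat p * PauliMat p = 1 := by
  fin_cases p <;> simp [PauliMat, Matrix.one_fin_two]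

lemma pauliWord_succ_mul {n : ℕ} (P Q : Fin (n + 1) → Fin 4) :
    pauliWord (n + 1) P * pauliWord (n + 1) Q =
      Matrix.reindex (finProdFinEquiv.trans (finCongr (by ring)))
        (finProdFinEquiv.trans (finCongr (by ring)))
        (Matrix.kroneckerMap (· * ·) (PauliMat (P 0) * PauliMat (Q 0))
          (pauliWord n (fun j => P j.succ) * pauliWord n (fun j => Q j.succ))) := by
  simp only [pauliWord, Matrix.reindex_apply, Matrix.submatrix_mul_equiv]
  rw [Matrix.mul_kronecker_mul]

lemma pauliWord_mul_comm {n : ℕ} (P Q : Fin n → Fin 4) :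
    pauliWord n P * pauliWord n Q = (wordSign P Q : ℂ) • (pauliWord n Q * pauliWord n P) := by
  induction n with
  | zero => simp [wordSign, pauliWord]
  | succ n ih =>
    rw [pauliWord_succ_mul, pauliWord_succ_mul, pauliMat_mul_comm, ih]
    simp only [wordSign, Fin.prod_univ_succ, Int.cast_mul, Matrix.smul_kronecker,
      Matrix.kronecker_smul, smul_smul, Matrix.reindex_apply, Matrix.submatrix_smul, Pi.smul_apply,
      mul_comm]

lemma pauliWord_mul_self {n : ℕ} (P : Fin n → Fin 4) : pauliWord n P * pauliWord n P = 1 := by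
  induction n with
  | zero => simp [pauliWord]
  | succ n ih =>
    rw [pauliWord_succ_mul, pauliMat_mul_self, ih, Matrix.one_kronecker_one, Matrix.reindex_apply,
      Matrix.submatrix_one_equiv]

lemma pauliWord_mul_ne_zero {n : ℕ} (P Q : Fin n → Fin 4) :
    pauliWord n P * pauliWord n Q ≠ 0 := by
  intro h
  have h1 : pauliWord n P * (pauliWord n P * pauliWord n Q) * pauliWord n Q = 1 := by
    rw [← mul_assoc, pauliWord_mul_self, one_mul, pauliWord_mul_self]
  rw [h] at h1
  simp at h1

lemma neg_matrix_ne_self {n : ℕ} {A : Matrix (Fin n) (Fin n) ℂ} (hA : A ≠ 0) : -A ≠ A := by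
  intro h
  apply hA
  ext a b
  exact neg_eq_self.1 (congrFun (congrFun h a) b)

lemma pauliWord_commute_iff {n : ℕ} (P Q : Fin n → Fin 4) :
    pauliWord n P * pauliWord n Q = pauliWord n Q * pauliWord n P ↔ wordSign P Q = 1 := by
  rw [pauliWord_mul_comm P Q]
  rcases wordSign_eq P Q with h | h
  · simp [h]
  · simpa [h] using neg_matrix_ne_self (pauliWord_mul_ne_zero Q P)

/-- The letters of the six generators of the Steane stabilizer. -/
def genWord : Fin 6 → Fin 7 → Fin 4 :=
  ![![0, 0, 0, 1, 1, 1, 1], ![0, 1, 1, 0, 0, 1, 1], ![1, 0, 1, 0, 1, 0, 1],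
    ![0, 0, 0, 3, 3, 3, 3], ![0, 3, 3, 0, 0, 3, 3], ![3, 0, 3, 0, 3, 0, 3]]

lemma steaneGens_eq (i : Fin 6) : steaneGens i = pauliWord 7 (genWord i) := by
  fin_cases i <;> rfl

/-- The syndrome of a Pauli word, computed on letters only. -/
def wordSyndrome (P : Fin 7 → Fin 4) : Fin 6 → ZMod 2 :=
  fun i => if wordSign P (genWord i) = 1 then 0 else 1

lemma syndrome_pauliWord (P : Fin 7 → Fin 4) :
    syndrome steaneGens (pauliWord 7 P) = wordSyndrome P := by
  funext i
  simp only [syndrome, wordSyndrome, steaneGens_eq, pauliWord_commute_iff]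

/-- The logical operators `XXXXXXX` and `ZZZZZZZ` (letter `l = 1` or `l = 3`) commute with the
whole stabilizer, since every generator has even weight. -/
lemma commute_of_mem_closure {l : Fin 4} (hl : l = 1 ∨ l = 3)
    {A : Matrix (Fin (2 ^ 7)) (Fin (2 ^ 7)) ℂ}
    (hA : A ∈ Submonoid.closure (Set.range steaneGens)) :
    A * pauliWord 7 (fun _ => l) = pauliWord 7 (fun _ => l) * A := by
  induction hA using Submonoid.closure_induction with
  | mem x hx =>
    obtain ⟨i, rfl⟩ := hx
    rw [steaneGens_eq, pauliWord_commute_iff]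
    rcases hl with rfl | rfl <;> revert i <;> decide +kernel
  | one => simp
  | mul x y _ _ hx hy => rw [mul_assoc, hy, ← mul_assoc, hx, mul_assoc]

/-- The product of two words whose signs against `XXXXXXX` (or `ZZZZZZZ`) differ is not
proportional to a stabilizer element. -/
lemma wordSign_of_mem {l : Fin 4} (hl : l = 1 ∨ l = 3) (P Q : Fin 7 → Fin 4) {c : ℂ} (hc : c ≠ 0)
    (h : c • (pauliWord 7 Q * pauliWord 7 P) ∈ Submonoid.closure (Set.range steaneGens)) :
    wordSign Q (fun _ => l) = wordSign P (fun _ => l) := by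
  have h1 := commute_of_mem_closure hl h
  set L := pauliWord 7 (fun _ => l) with hL
  rw [smul_mul_assoc, mul_smul_comm] at h1
  have h2 := smul_right_injective _ hc h1
  have h3 : pauliWord 7 Q * pauliWord 7 P * L =
      ((wordSign P (fun _ => l) : ℂ) * (wordSign Q (fun _ => l) : ℂ)) •
        (L * (pauliWord 7 Q * pauliWord 7 P)) := by
    rw [mul_assoc, hL, pauliWord_mul_comm P, mul_smul_comm, ← mul_assoc, pauliWord_mul_comm Q,
      smul_mul_assoc, smul_smul, mul_assoc]
  have hne : L * (pauliWord 7 Q * pauliWord 7 P) ≠ 0 := by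
    intro h0
    apply pauliWord_mul_ne_zero Q P
    rw [← one_mul (pauliWord 7 Q * pauliWord 7 P), ← pauliWord_mul_self (fun _ => l), mul_assoc,
      ← hL, h0, mul_zero]
  rw [h2] at h3
  rcases wordSign_eq P (fun _ => l) with hP | hP <;>
    rcases wordSign_eq Q (fun _ => l) with hQ | hQ <;>
    simp [hP, hQ, (neg_matrix_ne_self hne).symm] at h3 ⊢

/-- The word with letter `p` at position `j`, letter `q` at position `k ≠ j`, and `I` elsewhere. -/
def pairWord (j k : Fin 7) (p q : Fin 4) : Fin 7 → Fin 4 :=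
  fun i => if i = j then p else if i = k then q else 0

/-- The word `φ₇(ε(P))` fails to be `P` on a two-qubit error only if its product with `P` is,
up to stabilizer elements, a nontrivial logical operator, seen by `XXXXXXX` or `ZZZZZZZ`. -/
lemma phi7Word_eq_or (j k : Fin 7) (hjk : j ≠ k) (p q : Fin 4) :
    phi7Word (wordSyndrome (pairWord j k p q)) = pairWord j k p q ∨
    ∃ l : Fin 4, (l = 1 ∨ l = 3) ∧
      wordSign (phi7Word (wordSyndrome (pairWord j k p q))) (fun _ => l) ≠
        wordSign (pairWord j k p q) (fun _ => l) := by
  revert j k hjk p q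
  decide +kernel

lemma card_corrected (j k : Fin 7) (hjk : j ≠ k) :
    (Finset.univ.filter (fun x : Fin 4 × Fin 4 =>
      phi7Word (wordSyndrome (pairWord j k x.1 x.2)) = pairWord j k x.1 x.2)).card = 9 := by
  revert j k hjk
  decide +kernel

lemma corrected_iff (j k : Fin 7) (hjk : j ≠ k) (p q : Fin 4) :
    (∃ c ∈ PauliPhase,
      c • (phi7 (syndrome steaneGens (pauliWord 7 (pairWord j k p q))) *
        pauliWord 7 (pairWord j k p q)) ∈ Submonoid.closure (Set.range steaneGens)) ↔
      phi7Word (wordSyndrome (pairWord j k p q)) = pairWord j k p q := by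
  rw [syndrome_pauliWord, phi7]
  constructor
  · rintro ⟨c, hc, hmem⟩
    have hc0 : c ≠ 0 := by
      rintro rfl
      simp [PauliPhase, Complex.I_ne_zero.symm] at hc
    rcases phi7Word_eq_or j k hjk p q with h | ⟨l, hl, hne⟩
    · exact h
    · exact absurd (wordSign_of_mem hl _ _ hc0 hmem) hne
  · intro h
    refine ⟨1, by simp [PauliPhase], ?_⟩
    rw [h, pauliWord_mul_self, one_smul]
    exact one_mem _

/-- f_{S₇}(2) = 9/16: for each two-element subset {j,k} of the qubits,
exactly 9 of the 16 Pauli words supported in {j,k} are corrected by φ₇ (up to a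
phase c ∈ {1,-1,i,-i}). -/
theorem steane_two_qubit_count (j k : Fin 7) (hjk : j ≠ k) :
    (Finset.univ.filter (fun P : Fin 7 → Fin 4 =>
      (∀ i, i ≠ j → i ≠ k → P i = 0) ∧
      ∃ c ∈ PauliPhase,
        c • (phi7 (syndrome steaneGens (pauliWord 7 P)) * pauliWord 7 P) ∈
          Submonoid.closure (Set.range steaneGens))).card = 9 := by
  rw [← card_corrected j k hjk]
  symm
  refine Finset.card_bij (fun x _ => pairWord j k x.1 x.2) ?_ ?_ ?_
  · rintro ⟨p, q⟩ hx
    simp only [Finset.mem_filter, Finset.mem_univ, true_and] at hx ⊢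
    exact ⟨fun i hi hi' => by simp [pairWord, hi, hi'], (corrected_iff j k hjk p q).2 hx⟩
  · rintro ⟨p, q⟩ _ ⟨p', q'⟩ _ h
    have h1 := congrFun h j
    have h2 := congrFun h k
    simp [pairWord] at h1
    simp [pairWord, hjk.symm] at h2
    rw [h1, h2]
  · intro P hP
    simp only [Finset.mem_filter, Finset.mem_univ, true_and] at hP
    have hPe : pairWord j k (P j) (P k) = P := by
      funext i
      unfold pairWord
      split_ifs with h1 h2
      · rw [h1]
      · rw [h2]
      · exact (hP.1 i h1 h2).symm
    refine ⟨(P j, P k), ?_, hPe⟩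
    simp only [Finset.mem_filter, Finset.mem_univ, true_and]
    rw [← corrected_iff j k hjk, hPe]
    exact hP.2

end
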